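/- arXiv:2404.04832 — 4 statements merged into one kernel-verified Lean document; each statement's English description precedes it below -/
import Mathlib

section
/- Fix a real constant D > 0 and reals n_h, n_v with n_h ≥ 4, n_v ≥ 4, n_h ≤ (3/2)·n_v and n_v ≤ (3/2)·n_h. Then the derivative of the map α ↦ l̄(n_h, n_v, α) is strictly negative at α = 0 and strictly positive at α = 1; consequently the minimum of l̄(n_h, n_v, ·) over the interval [0, 1] is attained at some interior point α* ∈ (0, 1). -/
/-- Average travel distance of a sorting task. -/
noncomputable def lbar (D nh nv α : ℝ) : ℝ :=
  2 * D * ((nh^2 + nv^2) / (nh + nv) * ((-α^4 - 5*α^2 + 18*α) / 12)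
    + nh * nv / (nh + nv) * ((-α^2 + 2*α) / 4)
    + (3*α^3 - α^2 - 3*α - 5) / (12 * (nh + nv))
    + (nh + nv) * ((α^2 - 2*α + 1) / 2)
    + (-α^2 + 2*α) / 2)

/-!
At an endpoint minimum the derivative cannot point downhill into the interval, so its signs at `0`
and `1` already force an interior minimum. The sign at `1` is clear; at `0`, after clearing
denominators, it is that of `2 (nh² + nv²) + 4 (nh + nv) - 6 nh nv - 1`, which is negative because
the product term dominates when `nh` and `nv` are large and of comparable size.
-/

theorem sub_mul_nonneg_of_isLocalMinOn {f : ℝ → ℝ} {f' x y : ℝ} {s : Set ℝ}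
    (hmin : IsLocalMinOn f s x) (hf : HasDerivWithinAt f f' s x) (hseg : segment ℝ x y ⊆ s) :
    0 ≤ (y - x) * f' := by
  simpa using hmin.hasFDerivWithinAt_nonneg hf.hasFDerivWithinAt
    (sub_mem_posTangentConeAt_of_segment_subset hseg)

theorem exists_mem_Ioo_isMinOn_Icc_of_hasDerivWithinAt {f : ℝ → ℝ} {fa' fb' a b : ℝ} (hab : a < b)
    (hf : LowerSemicontinuousOn f (Set.Icc a b))
    (hfa : HasDerivWithinAt f fa' (Set.Icc a b) a) (hfb : HasDerivWithinAt f fb' (Set.Icc a b) b)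
    (ha : fa' < 0) (hb : 0 < fb') : ∃ x ∈ Set.Ioo a b, IsMinOn f (Set.Icc a b) x := by
  obtain ⟨x, hx, hmin⟩ := hf.exists_isMinOn (Set.nonempty_Icc.2 hab.le) isCompact_Icc
  have hxa : a ≠ x := by
    rintro rfl
    have hinward := sub_mul_nonneg_of_isLocalMinOn hmin.localize hfa (segment_eq_Icc hab.le).subset
    exact (mul_neg_of_pos_of_neg (sub_pos.2 hab) ha).not_ge hinward
  have hxb : x ≠ b := by
    rintro rfl
    have hinward := sub_mul_nonneg_of_isLocalMinOn hmin.localize hfb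
      ((segment_symm ℝ x a).trans (segment_eq_Icc hab.le)).subset
    exact (mul_neg_of_neg_of_pos (sub_neg.2 hab) hb).not_ge hinward
  exact ⟨x, ⟨hx.1.lt_of_ne hxa, hx.2.lt_of_ne hxb⟩, hmin⟩

theorem two_mul_sq_add_sq_add_four_mul_add_le_six_mul_mul {R : Type*} [CommRing R] [LinearOrder R]
    [IsStrictOrderedRing R] {a b : R} (ha : 4 ≤ a) (hb : 4 ≤ b) (hab : 2 * a ≤ 3 * b)
    (hba : 2 * b ≤ 3 * a) : 2 * (a^2 + b^2) + 4 * (a + b) ≤ 6 * (a * b) := by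
  -- The product of the two ratio bounds loses too much at `a = b`, hence the ordering.
  wlog hle : a ≤ b generalizing a b
  · simpa only [add_comm, mul_comm] using this hb ha hba hab (le_of_not_ge hle)
  have hratio : 0 ≤ (b - a) * (3 * a - 2 * b) :=
    mul_nonneg (sub_nonneg.2 hle) (sub_nonneg.2 hba)
  have hsize : 0 ≤ (a - 4) * (a + b) := mul_nonneg (sub_nonneg.2 ha) (by linarith)
  linear_combination hratio + hsize

theorem hasDerivAt_lbar (D nh nv x : ℝ) :
    HasDerivAt (lbar D nh nv)
      (2 * D * ((nh^2 + nv^2) / (nh + nv) * ((-4*x^3 - 10*x + 18) / 12)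
        + nh * nv / (nh + nv) * ((-2*x + 2) / 4)
        + (9*x^2 - 2*x - 3) / (12 * (nh + nv))
        + (nh + nv) * ((2*x - 2) / 2)
        + (-2*x + 2) / 2)) x := by
  have hid := hasDerivAt_id' x
  have hsq := hasDerivAt_pow 2 x
  have hquartic : HasDerivAt (fun α : ℝ => -α^4 - 5*α^2 + 18*α) (-4*x^3 - 10*x + 18) x :=
    (((hasDerivAt_pow 4 x).fun_neg.fun_sub (hsq.const_mul 5)).fun_add
      (hid.const_mul 18)).congr_deriv (by norm_num; ring)
  have hconcave : HasDerivAt (fun α : ℝ => -α^2 + 2*α) (-2*x + 2) x :=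
    (hsq.fun_neg.fun_add (hid.const_mul 2)).congr_deriv (by norm_num)
  have hcubic : HasDerivAt (fun α : ℝ => 3*α^3 - α^2 - 3*α - 5) (9*x^2 - 2*x - 3) x :=
    (((((hasDerivAt_pow 3 x).const_mul 3).fun_sub hsq).fun_sub
      (hid.const_mul 3)).sub_const 5).congr_deriv (by norm_num; ring)
  have hconvex : HasDerivAt (fun α : ℝ => α^2 - 2*α + 1) (2*x - 2) x :=
    ((hsq.fun_sub (hid.const_mul 2)).add_const 1).congr_deriv (by norm_num)
  exact (((((hquartic.div_const 12).const_mul _).fun_add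
    ((hconcave.div_const 4).const_mul _)).fun_add
    (hcubic.div_const _)).fun_add
    ((hconvex.div_const 2).const_mul _)).fun_add
    (hconcave.div_const 2) |>.const_mul (2 * D)

section EndpointDerivatives

variable (D : ℝ) {nh nv : ℝ}

theorem hasDerivAt_lbar_zero (hsum : nh + nv ≠ 0) :
    HasDerivAt (lbar D nh nv)
      (D / (2 * (nh + nv)) * (2 * (nh^2 + nv^2) + 4 * (nh + nv) - 6 * (nh * nv) - 1)) 0 :=
  (hasDerivAt_lbar D nh nv 0).congr_deriv (by field_simp; ring)

theorem hasDerivAt_lbar_one (hsum : nh + nv ≠ 0) :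
    HasDerivAt (lbar D nh nv) (2 * D / (3 * (nh + nv)) * (nh^2 + nv^2 + 1)) 1 :=
  (hasDerivAt_lbar D nh nv 1).congr_deriv (by field_simp; ring)

end EndpointDerivatives

theorem lbar_interior_min_general {D nh nv : ℝ} (hD : 0 < D) (hsum : 0 < nh + nv)
    (hquad : 2 * (nh ^ 2 + nv ^ 2) + 4 * (nh + nv) < 6 * (nh * nv) + 1) :
    deriv (lbar D nh nv) 0 < 0 ∧ 0 < deriv (lbar D nh nv) 1 ∧
      ∃ αstar ∈ Set.Ioo (0:ℝ) 1, IsMinOn (lbar D nh nv) (Set.Icc 0 1) αstar := by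
  have hderiv₀ := hasDerivAt_lbar_zero D hsum.ne'
  have hderiv₁ := hasDerivAt_lbar_one D hsum.ne'
  have hneg := mul_neg_of_pos_of_neg (show 0 < D / (2 * (nh + nv)) by positivity)
    (show 2 * (nh^2 + nv^2) + 4 * (nh + nv) - 6 * (nh * nv) - 1 < 0 by linarith)
  have hpos : 0 < 2 * D / (3 * (nh + nv)) * (nh^2 + nv^2 + 1) := by positivity
  have hcont : ContinuousOn (lbar D nh nv) (Set.Icc 0 1) :=
    HasDerivAt.continuousOn fun x _ => hasDerivAt_lbar D nh nv x
  exact ⟨hderiv₀.deriv.trans_lt hneg, hpos.trans_eq hderiv₁.deriv.symm,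
    exists_mem_Ioo_isMinOn_Icc_of_hasDerivWithinAt zero_lt_one hcont.lowerSemicontinuousOn
      hderiv₀.hasDerivWithinAt hderiv₁.hasDerivWithinAt hneg hpos⟩

theorem lbar_interior_min
    (D nh nv : ℝ) (hD : 0 < D) (hnh : 4 ≤ nh) (hnv : 4 ≤ nv)
    (hhv : nh ≤ (3/2) * nv) (hvh : nv ≤ (3/2) * nh) :
    deriv (fun α => lbar D nh nv α) 0 < 0 ∧
    0 < deriv (fun α => lbar D nh nv α) 1 ∧
    ∃ αstar ∈ Set.Ioo (0:ℝ) 1, ∀ α ∈ Set.Icc (0:ℝ) 1,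
      lbar D nh nv αstar ≤ lbar D nh nv α := by
  have hquad := two_mul_sq_add_sq_add_four_mul_add_le_six_mul_mul hnh hnv
    (by linarith) (by linarith)
  exact lbar_interior_min_general hD (by linarith) (by linarith)
end

section
/- Fix a real constant D > 0 and reals S > 0 and k with 1 ≤ k ≤ 2, such that √(S/k) ≥ 4. Then for every α ∈ (0, 1], l̄(√(k·S), √(S/k), α) ≥ l̄(√S, √S, α); that is, among aisle networks of fixed area with length-to-width ratio at most 2, the square-shaped network minimizes the average travel distance. -/
/-! For a fixed area `p = nh * nv` the identity `nh² + nv² = (nh + nv)² - 2p` turns the average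
travel distance into a function of `s = nh + nv` alone, of the form `2D (a s - b / s + c)`. For
`α ∈ [0, 1]` both `a` and `b` are nonnegative, so the distance is nondecreasing in `s`, and by AM-GM
`s` is least for the square. -/

open Set

theorem monotoneOn_mul_sub_div {𝕜 : Type*} [Field 𝕜] [LinearOrder 𝕜] [IsStrictOrderedRing 𝕜]
    {a b : 𝕜} (ha : 0 ≤ a) (hb : 0 ≤ b) :
    MonotoneOn (fun s ↦ a * s - b / s) (Ioi 0) := by
  intro s hs t _ hst
  exact sub_le_sub (mul_le_mul_of_nonneg_left hst ha) (div_le_div_of_nonneg_left hb hs hst)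

theorem two_mul_sqrt_mul_le_add {x y : ℝ} (hx : 0 ≤ x) (hy : 0 ≤ y) :
    2 * √(x * y) ≤ x + y := by
  rw [Real.sqrt_mul hx]
  simpa only [Real.sq_sqrt hx, Real.sq_sqrt hy, mul_assoc] using two_mul_le_add_sq √x √y

theorem sqrt_mul_mul_sqrt_div {k S : ℝ} (hk : 0 < k) (hS : 0 ≤ S) :
    √(k * S) * √(S / k) = S := by
  rw [← Real.sqrt_mul (mul_nonneg hk.le hS), mul_comm k S, mul_assoc, mul_div_cancel₀ S hk.ne',
    Real.sqrt_mul_self hS]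

/-- The coefficient `a` in the normal form `2D (a s - b / s + c)` of the average travel distance,
where `s = nh + nv`. -/
noncomputable def lbarLinearCoeff (α : ℝ) : ℝ :=
  (6 + 6 * α + α ^ 2 - α ^ 4) / 12

/-- The coefficient `b` in the normal form `2D (a s - b / s + c)` of the average travel distance,
where `s = nh + nv` and `p = nh * nv`. -/
noncomputable def lbarReciprocalCoeff (p α : ℝ) : ℝ :=
  (p * (α * (30 - 7 * α - 2 * α ^ 3)) + (5 + 3 * α + α ^ 2 - 3 * α ^ 3)) / 12

theorem lbarLinearCoeff_nonneg {α : ℝ} (hα : α ∈ Icc 0 1) : 0 ≤ lbarLinearCoeff α := by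
  have hα_pow : α ^ 4 ≤ α ^ 2 := pow_le_pow_of_le_one hα.1 hα.2 (by norm_num)
  unfold lbarLinearCoeff
  linarith [hα.1]

theorem lbarReciprocalCoeff_nonneg {p α : ℝ} (hp : 0 ≤ p) (hα : α ∈ Icc 0 1) :
    0 ≤ lbarReciprocalCoeff p α := by
  have hα_cube : α ^ 3 ≤ α := pow_le_of_le_one hα.1 hα.2 (by norm_num)
  have h_area : 0 ≤ 30 - 7 * α - 2 * α ^ 3 := by linarith [hα.2]
  have h_const : 0 ≤ 5 + 3 * α + α ^ 2 - 3 * α ^ 3 := by linarith [sq_nonneg α]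
  exact div_nonneg (add_nonneg (mul_nonneg hp (mul_nonneg hα.1 h_area)) h_const) (by norm_num)

theorem lbar_eq_linear_sub_reciprocal (D α : ℝ) {nh nv : ℝ} (h : nh + nv ≠ 0) :
    lbar D nh nv α = 2 * D * (lbarLinearCoeff α * (nh + nv)
      - lbarReciprocalCoeff (nh * nv) α / (nh + nv) + (-α ^ 2 + 2 * α) / 2) := by
  unfold lbar lbarLinearCoeff lbarReciprocalCoeff
  field_simp
  ring

theorem lbar_le_lbar_of_mul_eq_of_add_le {D α nh nv nh' nv' : ℝ} (hD : 0 ≤ D)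
    (hα : α ∈ Icc 0 1) (hpos : 0 < nh + nv) (harea : 0 ≤ nh * nv)
    (hmul : nh * nv = nh' * nv') (hadd : nh + nv ≤ nh' + nv') :
    lbar D nh nv α ≤ lbar D nh' nv' α := by
  have hpos' : 0 < nh' + nv' := hpos.trans_le hadd
  rw [lbar_eq_linear_sub_reciprocal D α hpos.ne', lbar_eq_linear_sub_reciprocal D α hpos'.ne',
    ← hmul]
  gcongr _ * (?_ + _)
  exact monotoneOn_mul_sub_div (lbarLinearCoeff_nonneg hα) (lbarReciprocalCoeff_nonneg harea hα)
    hpos hpos' hadd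

theorem lbar_square_optimal_general {D α nh nv : ℝ} (hD : 0 ≤ D) (hα : α ∈ Icc 0 1)
    (hnh : 0 < nh) (hnv : 0 < nv) :
    lbar D √(nh * nv) √(nh * nv) α ≤ lbar D nh nv α := by
  have harea : 0 < nh * nv := mul_pos hnh hnv
  have hside : 0 < √(nh * nv) := Real.sqrt_pos.mpr harea
  have hmul : √(nh * nv) * √(nh * nv) = nh * nv := Real.mul_self_sqrt harea.le
  have hadd : √(nh * nv) + √(nh * nv) ≤ nh + nv := by
    simpa only [two_mul] using two_mul_sqrt_mul_le_add hnh.le hnv.le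
  exact lbar_le_lbar_of_mul_eq_of_add_le hD hα (add_pos hside hside)
    (mul_self_nonneg _) hmul hadd

theorem lbar_square_optimal
    (D S k : ℝ) (hD : 0 < D) (hS : 0 < S) (hk1 : 1 ≤ k) (hk2 : k ≤ 2)
    (hside : 4 ≤ Real.sqrt (S / k)) :
    ∀ α ∈ Set.Ioc (0:ℝ) 1,
      lbar D (Real.sqrt S) (Real.sqrt S) α ≤
        lbar D (Real.sqrt (k * S)) (Real.sqrt (S / k)) α := by
  intro α hα
  have hk : 0 < k := zero_lt_one.trans_le hk1
  simpa only [sqrt_mul_mul_sqrt_div hk hS.le] using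
    lbar_square_optimal_general hD.le (Ioc_subset_Icc_self hα)
      (Real.sqrt_pos.mpr (mul_pos hk hS)) (Real.sqrt_pos.mpr (div_pos hS hk))
end

section
/- Fix a real constant D > 0. For every real n > 0 and every α ∈ [0, 1], l̄(n, n, α) ≤ 2D·(9n/8 + 1/2). In particular, for a square network the average travel distance of a sorting task never exceeds 2D·(9n/8 + 1/2). -/
/-!
For `n_h = n_v = n` the gap between `l̄(n, n, α)` and its bound is, up to the factor `2D`, a
Laurent polynomial in `n` with terms of degree `1`, `-1` and `0`, and on `[0, 1]` each of its
coefficients is a sum of visibly nonnegative terms. The bound `9n/8 + 1/2` comes from `α = 1`,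
where the coefficients of degree `1` and `0` vanish.
-/

/-- The gap `9n/8 + 1/2 - l̄(n, n, α) / (2D)` on a square network, with the coefficients of
`n`, `1/n` and `1` written so that their signs on `[0, 1]` can be read off. -/
noncomputable def squareGap (n α : ℝ) : ℝ :=
  n * ((2 * (1 - α ^ 2) ^ 2 + (1 - α) * (1 + 7 * α)) / 24)
    + (3 * (1 - α) * (1 + α) ^ 2 + 4 * α ^ 2 + 2) / (24 * n)
    + (1 - α) ^ 2 / 2

theorem lbar_self_eq_sub_squareGap (D α : ℝ) {n : ℝ} (hn : n ≠ 0) :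
    lbar D n n α = 2 * D * (9 * n / 8 + 1 / 2 - squareGap n α) := by
  have sum_sq_div : (n ^ 2 + n ^ 2) / (n + n) = n := by field_simp
  have mul_div_sum : n * n / (n + n) = n / 2 := by field_simp; norm_num
  rw [lbar, squareGap, sum_sq_div, mul_div_sum]
  field_simp
  ring

theorem squareGap_nonneg {n α : ℝ} (hn : 0 ≤ n) (hα : α ∈ Set.Icc (0 : ℝ) 1) :
    0 ≤ squareGap n α := by
  have α_nonneg : 0 ≤ α := hα.1
  have one_sub_nonneg : 0 ≤ 1 - α := sub_nonneg.2 hα.2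
  unfold squareGap
  positivity

theorem lbar_square_upper_bound (D : ℝ) (hD : 0 < D) (n : ℝ) (hn : 0 < n) :
    ∀ α ∈ Set.Icc (0:ℝ) 1, lbar D n n α ≤ 2 * D * (9 * n / 8 + 1/2) := by
  intro α hα
  calc lbar D n n α = 2 * D * (9 * n / 8 + 1 / 2 - squareGap n α) :=
        lbar_self_eq_sub_squareGap D α hn.ne'
    _ ≤ 2 * D * (9 * n / 8 + 1 / 2) := by
        gcongr
        exact sub_le_self _ (squareGap_nonneg hn.le hα)
end

section
/- Fix a real constant D > 0 and reals n_h, n_v ≥ 1. Then for every α ∈ [0, 1], l̄(n_h, n_v, α) > 0. -/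
/-!
For a fixed sum `nh + nv > 0`, the function `lbar` is affine in `(nh - nv) ^ 2` with a slope that is
nonnegative on `0 ≤ α ≤ 1`, so it is smallest on the diagonal `nh = nv`. There it is a positive
multiple of a polynomial in `n = nh = nv` and `α`, whose value at the critical end `α = 0` is
`24 * n ^ 2 - 5`.
-/

theorem lbar_sub_lbar_balanced (D α : ℝ) {nh nv : ℝ} (hs : nh + nv ≠ 0) :
    lbar D nh nv α - lbar D ((nh + nv) / 2) ((nh + nv) / 2) α =
      D * (nh - nv) ^ 2 / (24 * (nh + nv)) * (30 * α - 7 * α ^ 2 - 2 * α ^ 4) := by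
  simp only [lbar, add_halves]
  field_simp
  ring

theorem lbar_balanced_le {D nh nv α : ℝ} (hD : 0 ≤ D) (hs : 0 < nh + nv)
    (hα : α ∈ Set.Icc (0 : ℝ) 1) :
    lbar D ((nh + nv) / 2) ((nh + nv) / 2) α ≤ lbar D nh nv α := by
  obtain ⟨hα₀, hα₁⟩ := hα
  have sq_le : α ^ 2 ≤ α := pow_le_of_le_one hα₀ hα₁ two_ne_zero
  have pow_four_le : α ^ 4 ≤ α := pow_le_of_le_one hα₀ hα₁ four_ne_zero
  have slope_nonneg : 0 ≤ 30 * α - 7 * α ^ 2 - 2 * α ^ 4 := by linarith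
  rw [← sub_nonneg, lbar_sub_lbar_balanced D α hs.ne']
  positivity

theorem lbar_self (D α : ℝ) {n : ℝ} (hn : n ≠ 0) :
    lbar D n n α =
      D / (12 * n) * (n ^ 2 * (24 - 6 * α + 11 * α ^ 2 - 2 * α ^ 4)
        + 12 * n * (2 * α - α ^ 2) + (3 * α ^ 3 - α ^ 2 - 3 * α - 5)) := by
  simp only [lbar, ← two_mul]
  field_simp
  ring

theorem lbar_self_pos {D n α : ℝ} (hD : 0 < D) (hn : 0 < n) (hn_sq : 5 / 24 < n ^ 2)
    (hα : α ∈ Set.Icc (0 : ℝ) 1) : 0 < lbar D n n α := by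
  obtain ⟨hα₀, hα₁⟩ := hα
  have sq_le : α ^ 2 ≤ α := pow_le_of_le_one hα₀ hα₁ two_ne_zero
  have pow_four_le_cube : α ^ 4 ≤ α ^ 3 := pow_le_pow_of_le_one hα₀ hα₁ (by norm_num)
  have pow_four_le : α ^ 4 ≤ α := pow_le_of_le_one hα₀ hα₁ four_ne_zero
  have quarter_lt : 1 / 4 < n := lt_of_pow_lt_pow_left₀ 2 hn.le (by linarith)
  have quadratic_term : 5 / 24 * (24 - 6 * α + 11 * α ^ 2 - 2 * α ^ 4) <
      n ^ 2 * (24 - 6 * α + 11 * α ^ 2 - 2 * α ^ 4) :=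
    mul_lt_mul_of_pos_right hn_sq (by linarith [sq_nonneg α])
  have linear_term : 3 * (2 * α - α ^ 2) ≤ 12 * n * (2 * α - α ^ 2) :=
    mul_le_mul_of_nonneg_right (by linarith) (by linarith)
  have lower_bound_nonneg : 0 ≤ 5 / 24 * (24 - 6 * α + 11 * α ^ 2 - 2 * α ^ 4)
      + 3 * (2 * α - α ^ 2) + (3 * α ^ 3 - α ^ 2 - 3 * α - 5) := by
    linarith [pow_nonneg hα₀ 3]
  rw [lbar_self D α hn.ne']
  exact mul_pos (by positivity) (by linarith)

-- The bound `5 / 6` is sharp: at `α = 0`, `lbar` is `D * (6 * s ^ 2 - 5) / (6 * s)`, `s = nh + nv`.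
theorem lbar_pos_general (D : ℝ) (hD : 0 < D) (nh nv : ℝ) (hs : 0 < nh + nv)
    (hs_sq : 5 / 6 < (nh + nv) ^ 2) : ∀ α ∈ Set.Icc (0 : ℝ) 1, 0 < lbar D nh nv α := by
  intro α hα
  have half_sq : 5 / 24 < ((nh + nv) / 2) ^ 2 := by linarith [div_pow (nh + nv) 2 2]
  calc
    0 < lbar D ((nh + nv) / 2) ((nh + nv) / 2) α := lbar_self_pos hD (half_pos hs) half_sq hα
    _ ≤ lbar D nh nv α := lbar_balanced_le hD.le hs hα

theorem lbar_pos (D : ℝ) (hD : 0 < D) (nh nv : ℝ) (hnh : 1 ≤ nh) (hnv : 1 ≤ nv) :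
    ∀ α ∈ Set.Icc (0:ℝ) 1, 0 < lbar D nh nv α :=
  lbar_pos_general D hD nh nv (by linarith) (by nlinarith)
end
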